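/- For every integer $d \ge 1$, the four quantities $C_0 = \sum_{k+m+n=d,\ n \text{ odd}} \frac{v^{\binom{n+1}{2}-2km+2k}}{[n]![2k]^{!!}[2m]^{!!}}$, $C_1 = \sum_{k+m+n=d,\ n \text{ even}} \frac{v^{\binom{n+1}{2}-2km+2k}}{[n]![2k]^{!!}[2m]^{!!}}$, $D_0 = \sum_{t+k+m+n=d,\ n \text{ even}} \frac{v^{t^2-2dt+t+2nt+\binom{n+1}{2}-2km-2m}}{[n]![2k]^{!!}[2m]^{!!}}(v-v^{-1})^t$, and $D_1 = \sum_{t+k+m+n=d,\ n \text{ odd}} \frac{v^{t^2-2dt+t+2nt+\binom{n+1}{2}-2km-2m}}{[n]![2k]^{!!}[2m]^{!!}}(v-v^{-1})^t$ are all equal to $\dfrac{v^d \prod_{j=1}^{d-1}(v^j+v^{-j})}{[d]!}$. -/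

import Mathlib

noncomputable section

abbrev K : Type := RatFunc ℚ

/-- The indeterminate `v` in `ℚ(v)`. -/
def v : K := RatFunc.X

/-- Quantum integer `[m] = (v^m - v^{-m})/(v - v^{-1})`. -/
def qint (m : ℤ) : K := (v ^ m - v ^ (-m)) / (v - v⁻¹)

/-- Quantum factorial `[r]! = ∏_{i=1}^r [i]`. -/
def qfact (r : ℕ) : K := ∏ i ∈ Finset.range r, qint ((i : ℤ) + 1)

/-- Quantum double factorial `[2r]!! = ∏_{i=1}^r [2i]`. -/
def qdfact (r : ℕ) : K := ∏ i ∈ Finset.range r, qint (2 * ((i : ℤ) + 1))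

/-- Balanced Gaussian binomial coefficient `[m][m-1]⋯[m-r+1]/[r]!`. -/
def qbinom (m : ℤ) (r : ℕ) : K := (∏ i ∈ Finset.range r, qint (m - (i : ℤ))) / qfact r

/-- Gaussian binomial with integer lower index, vanishing for negative lower index. -/
def qbinomZ (m r : ℤ) : K := if 0 ≤ r then qbinom m r.toNat else 0

/-- The sum $C_{par}$ over triples $k+m+n=d$ with $n \equiv par \pmod 2$. -/
def Csum (d par : ℕ) : K :=
  ∑ k ∈ Finset.range (d + 1), ∑ m ∈ Finset.range (d + 1 - k),
    if (d - k - m) % 2 = par then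
      v ^ ((((d - k - m) * (d - k - m + 1) / 2 : ℕ) : ℤ)
            - 2 * (k : ℤ) * m + 2 * (k : ℤ)) /
        (qfact (d - k - m) * qdfact k * qdfact m)
    else 0

/-- The sum $D_{par}$ over quadruples $t+k+m+n=d$ with $n \equiv par \pmod 2$. -/
def Dsum (d par : ℕ) : K :=
  ∑ t ∈ Finset.range (d + 1), ∑ k ∈ Finset.range (d + 1 - t),
    ∑ m ∈ Finset.range (d + 1 - t - k),
      if (d - t - k - m) % 2 = par then
        v ^ ((t : ℤ) ^ 2 - 2 * (d : ℤ) * t + (t : ℤ)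
              + 2 * ((d - t - k - m : ℕ) : ℤ) * t
              + (((d - t - k - m) * (d - t - k - m + 1) / 2 : ℕ) : ℤ)
              - 2 * (k : ℤ) * m - 2 * (m : ℤ)) *
          (v - v⁻¹) ^ t /
          (qfact (d - t - k - m) * qdfact k * qdfact m)
      else 0

/-!
Put `c = v (v - v⁻¹)`, `E = ∑ v ^ (n(n+1)/2) / [n]! Xⁿ` and `F = ∑ v ^ k² / [2k]!! Xᵏ`. The
recursion of the quantum factorials says that `E (v⁻¹ X) = (1 - c X) E (v X)` and
`F (v⁻² X) = (1 - c X) F (v² X)`. Such a functional equation determines a series with constant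
term `1`, whence `F (v X) F (v⁻¹ X) = E` and `∑ v ^ (s - s²) Eₛ Xˢ = E (-X)⁻¹`.

Since `-2km = k² + m² - (k + m)²`, the sums over `k` and `m` in `C` are, up to the factor
`v ^ (-(k + m)²)`, coefficients of `F (v² X) F (X) = E (v X)`. In the same way the sums over `t`,
`k` and `m` in `D` are coefficients of
`(1 - c X)⁻¹ F (X) F (v⁻² X) = (1 - c X)⁻¹ E (v⁻¹ X) = E (v X)`. Hence both `C` and `D` are the
coefficients of `E (-X)⁻¹ (E (X) ± E (-X)) / 2 = (E (X) / E (-X) ± 1) / 2`, and the quotient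
`E (X) / E (-X)` inherits a two-term recursion from the functional equation of `E`.
-/

section Antidiagonal

open Finset

variable {M : Type*} [AddCommMonoid M]

lemma sum_antidiagonal_assoc (d : ℕ) (f : ℕ → ℕ → ℕ → M) :
    ∑ p ∈ antidiagonal d, ∑ q ∈ antidiagonal p.2, f p.1 q.1 q.2 =
      ∑ p ∈ antidiagonal d, ∑ q ∈ antidiagonal p.1, f q.1 q.2 p.2 := by
  simp only [sum_sigma']
  apply sum_nbij' (fun ⟨⟨i, _⟩, ⟨k, l⟩⟩ ↦ ⟨(i + k, l), (i, k)⟩)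
    (fun ⟨⟨_, j⟩, ⟨k, l⟩⟩ ↦ ⟨(k, l + j), (l, j)⟩) <;>
    grind [HasAntidiagonal.mem_antidiagonal]

lemma sum_range_sum_range_eq_sum_antidiagonal (d : ℕ) (f : ℕ → ℕ → ℕ → M) :
    ∑ k ∈ range (d + 1), ∑ m ∈ range (d + 1 - k), f k m (d - k - m) =
      ∑ p ∈ antidiagonal d, ∑ q ∈ antidiagonal p.1, f q.1 q.2 p.2 := by
  rw [← sum_antidiagonal_assoc, Nat.sum_antidiagonal_eq_sum_range_succ_mk]
  refine sum_congr rfl fun k hk ↦ ?_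
  rw [Nat.sum_antidiagonal_eq_sum_range_succ_mk, Nat.sub_add_comm (mem_range_succ_iff.1 hk)]

lemma sum_range_sum_range_sum_range_eq_sum_antidiagonal (d : ℕ) (f : ℕ → ℕ → ℕ → ℕ → M) :
    ∑ t ∈ range (d + 1), ∑ k ∈ range (d + 1 - t), ∑ m ∈ range (d + 1 - t - k),
        f t k m (d - t - k - m) =
      ∑ p ∈ antidiagonal d, ∑ q ∈ antidiagonal p.1, ∑ r ∈ antidiagonal q.2,
        f q.1 r.1 r.2 p.2 := by
  rw [← sum_antidiagonal_assoc d fun t s n ↦ ∑ r ∈ antidiagonal s, f t r.1 r.2 n,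
    Nat.sum_antidiagonal_eq_sum_range_succ_mk]
  refine sum_congr rfl fun t ht ↦ ?_
  rw [← sum_range_sum_range_eq_sum_antidiagonal, Nat.sub_add_comm (mem_range_succ_iff.1 ht)]

end Antidiagonal

section ParityPart

open PowerSeries

variable {R : Type*} [CommRing R]

/-- The even (`par = 0`) or odd (`par = 1`) part of a power series. -/
def parityPart (par : ℕ) (f : R⟦X⟧) : R⟦X⟧ :=
  .mk fun n ↦ if n % 2 = par then coeff n f else 0

lemma two_mul_parityPart {par : ℕ} (hpar : par < 2) (f : R⟦X⟧) :
    2 * parityPart par f = f + (-1) ^ par * rescale (-1) f := by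
  ext n
  rw [two_mul]
  obtain h | h := Nat.even_or_odd n <;> interval_cases par <;>
    simp [parityPart, h.neg_one_pow, Nat.even_iff.1, Nat.odd_iff.1, h]

end ParityPart

section QExp

open PowerSeries

lemma constantCoeff_rescale {R : Type*} [CommSemiring R] (a : R) (f : R⟦X⟧) :
    constantCoeff (rescale a f) = constantCoeff f := by
  rw [← coeff_zero_eq_constantCoeff_apply, coeff_rescale, pow_zero, one_mul,
    coeff_zero_eq_constantCoeff_apply]

variable {F : Type*} [Field F] {q c : F} {f g : F⟦X⟧}

/-- A `q`-exponential series of rate `c`. The functional equation is the `q`-difference equation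
`(f (q X) - f (q⁻¹ X)) / X = c f (q X)` with denominators cleared. -/
structure IsQExp (q c : F) (f : F⟦X⟧) : Prop where
  constantCoeff_eq_one : constantCoeff f = 1
  rescale_inv_eq : rescale q⁻¹ f = (1 - C c * X) * rescale q f

lemma isQExp_iff_coeff_succ :
    IsQExp q c f ↔ constantCoeff f = 1 ∧
      ∀ n, (q ^ (n + 1) - q⁻¹ ^ (n + 1)) * coeff (n + 1) f = c * q ^ n * coeff n f := by
  suffices h : rescale q⁻¹ f = (1 - C c * X) * rescale q f ↔
      ∀ n, (q ^ (n + 1) - q⁻¹ ^ (n + 1)) * coeff (n + 1) f = c * q ^ n * coeff n f from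
    ⟨fun ⟨h0, h1⟩ ↦ ⟨h0, h.1 h1⟩, fun ⟨h0, h1⟩ ↦ ⟨h0, h.2 h1⟩⟩
  have hcoeff (n : ℕ) : coeff (n + 1) ((1 - C c * X) * rescale q f) =
      q ^ (n + 1) * coeff (n + 1) f - c * q ^ n * coeff n f := by
    rw [sub_mul, one_mul, mul_assoc, map_sub, coeff_C_mul, coeff_succ_X_mul, coeff_rescale,
      coeff_rescale, mul_assoc]
  refine ⟨fun h n ↦ ?_, fun h ↦ PowerSeries.ext fun n ↦ ?_⟩
  · have := congr(coeff (n + 1) $h)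
    rw [hcoeff, coeff_rescale] at this
    linear_combination -this
  · cases n with
    | zero => simp [coeff_zero_eq_constantCoeff_apply, constantCoeff_rescale]
    | succ n =>
      rw [hcoeff, coeff_rescale]
      linear_combination -h n

namespace IsQExp

protected lemma eq (hq : ∀ n : ℕ, q ^ (n + 1) - q⁻¹ ^ (n + 1) ≠ 0) (hf : IsQExp q c f)
    (hg : IsQExp q c g) : f = g := by
  rw [isQExp_iff_coeff_succ] at hf hg
  ext n
  induction n with
  | zero => rw [coeff_zero_eq_constantCoeff_apply, coeff_zero_eq_constantCoeff_apply, hf.1, hg.1]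
  | succ n ih => exact mul_left_cancel₀ (hq n) (by rw [hf.2, hg.2, ih])

protected lemma rescale (hf : IsQExp q c f) (a : F) : IsQExp q (c * a) (rescale a f) := by
  rw [isQExp_iff_coeff_succ] at hf ⊢
  refine ⟨by rw [constantCoeff_rescale, hf.1], fun n ↦ ?_⟩
  simp only [coeff_rescale, pow_succ a]
  linear_combination a ^ n * a * hf.2 n

protected lemma inv (hf : IsQExp q c f) : IsQExp q⁻¹ c f⁻¹ := by
  have hmul : f * f⁻¹ = 1 := PowerSeries.mul_inv_cancel f (by simp [hf.constantCoeff_eq_one])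
  have hmul_rescale (a : F) : rescale a f * rescale a f⁻¹ = 1 := by
    rw [← map_mul, hmul, map_one]
  refine ⟨by simp [hf.constantCoeff_eq_one], ?_⟩
  rw [inv_inv]
  linear_combination (1 - C c * X) * rescale q⁻¹ f⁻¹ * hmul_rescale q -
    rescale q f⁻¹ * hmul_rescale q⁻¹ +
    rescale q f⁻¹ * rescale q⁻¹ f⁻¹ * hf.rescale_inv_eq

lemma rescale_mul_rescale_inv (hq : q ≠ 0) (hf : IsQExp (q ^ 2) c f) :
    IsQExp q c (rescale q f * rescale q⁻¹ f) := by
  refine ⟨by simp [constantCoeff_rescale, hf.constantCoeff_eq_one], ?_⟩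
  have h := hf.rescale_inv_eq
  rw [sq, mul_inv] at h
  simp only [map_mul, rescale_rescale, mul_inv_cancel₀ hq, inv_mul_cancel₀ hq, h]
  ring

lemma mk_pow_mul_rescale_inv (hf : IsQExp q c f) :
    PowerSeries.mk (c ^ ·) * rescale q⁻¹ f = rescale q f := by
  have hgeom : PowerSeries.mk (c ^ ·) * (1 - C c * X) = 1 := by
    simpa [rescale_mk, rescale_X] using congr(rescale c $(mk_one_mul_one_sub_eq_one F))
  rw [hf.rescale_inv_eq, ← mul_assoc, hgeom, one_mul]

end IsQExp

/-- The Gaussian twist of a power series. The factor `q ^ (-n ^ 2)` turns a convolution of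
coefficients into one weighted by `q ^ (-2 * k * m)`; the factor `q ^ n` is included so that the
twist of a `q`-exponential series `f` is the inverse of `f (-X)`. -/
def gaussTwist (q : F) (f : F⟦X⟧) : F⟦X⟧ := .mk fun n ↦ q ^ ((n : ℤ) - n ^ 2) * coeff n f

namespace IsQExp

protected lemma gaussTwist (hq : q ≠ 0) (hf : IsQExp q c f) : IsQExp q⁻¹ (-c) (gaussTwist q f) := by
  rw [isQExp_iff_coeff_succ] at hf ⊢
  refine ⟨by simp [gaussTwist, ← coeff_zero_eq_constantCoeff_apply, hf.1], fun n ↦ ?_⟩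
  have hpow : q ^ (((n + 1 : ℕ) : ℤ) - (n + 1 : ℕ) ^ 2) * q ^ n =
      q ^ ((n : ℤ) - n ^ 2) * q⁻¹ ^ n := by
    rw [inv_pow, ← zpow_natCast, ← zpow_neg, ← zpow_add₀ hq, ← zpow_add₀ hq]
    congr 1
    push_cast
    ring
  simp only [gaussTwist, coeff_mk, inv_inv]
  linear_combination -q ^ (((n + 1 : ℕ) : ℤ) - (n + 1 : ℕ) ^ 2) * hf.2 n - c * coeff n f * hpow

lemma gaussTwist_mul_rescale_neg_one (hq : ∀ n : ℕ, q ^ (n + 1) - q⁻¹ ^ (n + 1) ≠ 0)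
    (hf : IsQExp q c f) : gaussTwist q f * rescale (-1) f = 1 := by
  have hq0 : q ≠ 0 := by rintro rfl; simpa using hq 0
  have hq' (n : ℕ) : q⁻¹ ^ (n + 1) - q⁻¹⁻¹ ^ (n + 1) ≠ 0 := by
    rw [inv_inv]; exact sub_ne_zero.2 (sub_ne_zero.1 (hq n)).symm
  have hneg : IsQExp q (-c) (rescale (-1) f) := by simpa using hf.rescale (-1)
  rw [(hf.gaussTwist hq0).eq hq' hneg.inv]
  exact PowerSeries.inv_mul_cancel _ (by simp [hneg.constantCoeff_eq_one])

lemma coeff_succ_gaussTwist_mul_self (hq : q ≠ 0) (hf : IsQExp q c f) (n : ℕ) :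
    (q ^ (n + 1) - q⁻¹ ^ (n + 1)) * coeff (n + 1) (gaussTwist q f * f) =
      c * (q ^ n + q⁻¹ ^ n) * coeff n (gaussTwist q f * f) := by
  set P := gaussTwist q f * f with hP
  have hfun : (1 + C c * X) * rescale q⁻¹ P =
      (1 - C c * X) * rescale q P := by
    have htwist := (hf.gaussTwist hq).rescale_inv_eq
    rw [inv_inv, map_neg] at htwist
    rw [hP, map_mul, map_mul, hf.rescale_inv_eq, htwist]
    ring
  have hcoeff := congr(coeff (n + 1) $hfun)
  simp only [add_mul, sub_mul, one_mul, mul_assoc, map_add, map_sub, coeff_C_mul,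
    coeff_succ_X_mul, coeff_rescale] at hcoeff
  linear_combination -hcoeff

end IsQExp

end QExp

section Quantum

open PowerSeries Finset

lemma v_ne_zero : v ≠ 0 := RatFunc.X_ne_zero

lemma v_pow_ne_one {n : ℕ} (hn : n ≠ 0) : v ^ n ≠ 1 := by
  intro h
  have hX : (Polynomial.X : Polynomial ℚ) ^ n = 1 :=
    RatFunc.algebraMap_injective ℚ (by simpa [v, RatFunc.algebraMap_X] using h)
  exact hn (by simpa using congr(Polynomial.natDegree $hX))

lemma v_pow_sub_inv_pow_ne_zero (n : ℕ) : v ^ (n + 1) - v⁻¹ ^ (n + 1) ≠ 0 := by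
  intro h
  refine v_pow_ne_one (n := (n + 1) + (n + 1)) (by omega) ?_
  rw [pow_add]
  nth_rewrite 1 [sub_eq_zero.1 h]
  rw [← mul_pow, inv_mul_cancel₀ v_ne_zero, one_pow]

lemma v_sub_inv_ne_zero : v - v⁻¹ ≠ 0 := by simpa using v_pow_sub_inv_pow_ne_zero 0

lemma qint_natCast_mul_v_sub_inv (n : ℕ) : qint n * (v - v⁻¹) = v ^ n - v⁻¹ ^ n := by
  rw [qint, div_mul_cancel₀ _ v_sub_inv_ne_zero, zpow_neg, zpow_natCast, inv_pow]

lemma qint_succ_ne_zero (n : ℕ) : qint ((n : ℤ) + 1) ≠ 0 := fun h ↦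
  v_pow_sub_inv_pow_ne_zero n (by rw [← qint_natCast_mul_v_sub_inv, Nat.cast_succ, h, zero_mul])

lemma qint_two_mul_succ_ne_zero (n : ℕ) : qint (2 * ((n : ℤ) + 1)) ≠ 0 := by
  convert qint_succ_ne_zero (2 * n + 1) using 2
  push_cast
  ring

lemma qfact_ne_zero (n : ℕ) : qfact n ≠ 0 := prod_ne_zero_iff.2 fun i _ ↦ qint_succ_ne_zero i

lemma qdfact_ne_zero (n : ℕ) : qdfact n ≠ 0 :=
  prod_ne_zero_iff.2 fun i _ ↦ qint_two_mul_succ_ne_zero i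

lemma qfact_succ (n : ℕ) : qfact (n + 1) = qfact n * qint ((n : ℤ) + 1) := prod_range_succ _ _

lemma qdfact_succ (n : ℕ) : qdfact (n + 1) = qdfact n * qint (2 * ((n : ℤ) + 1)) :=
  prod_range_succ _ _

/-- The quantum exponential series, the generating function of the terms of `Csum` and `Dsum` that
depend on `n`. -/
def qExpSeries : K⟦X⟧ := .mk fun n ↦ v ^ (n * (n + 1) / 2) / qfact n

/-- The analogue of `qExpSeries` for quantum double factorials, the generating function of the
terms of `Csum` and `Dsum` that depend on `k` or on `m`. The exponent `k ^ 2` is what remains of the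
cross term `-2 * k * m` after a `gaussTwist`. -/
def qdExpSeries : K⟦X⟧ := .mk fun k ↦ v ^ k ^ 2 / qdfact k

lemma isQExp_qExpSeries : IsQExp v (v * (v - v⁻¹)) qExpSeries := by
  refine isQExp_iff_coeff_succ.2 ⟨by simp [qExpSeries, ← coeff_zero_eq_constantCoeff_apply, qfact],
    fun n ↦ ?_⟩
  have htri : (n + 1) * (n + 1 + 1) / 2 = n * (n + 1) / 2 + (n + 1) := by
    rw [show (n + 1) * (n + 1 + 1) = n * (n + 1) + (n + 1) * 2 by ring,
      Nat.add_mul_div_right _ _ two_pos]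
  have hfact := qfact_ne_zero n
  have hint := qint_succ_ne_zero n
  rw [← qint_natCast_mul_v_sub_inv, qExpSeries, coeff_mk, coeff_mk, qfact_succ, htri, pow_add,
    pow_succ v n, Nat.cast_succ]
  field_simp

lemma isQExp_qdExpSeries : IsQExp (v ^ 2) (v * (v - v⁻¹)) qdExpSeries := by
  refine isQExp_iff_coeff_succ.2
    ⟨by simp [qdExpSeries, ← coeff_zero_eq_constantCoeff_apply, qdfact], fun n ↦ ?_⟩
  have hdfact := qdfact_ne_zero n
  have hint := qint_two_mul_succ_ne_zero n
  rw [← inv_pow, ← pow_mul, ← pow_mul, ← qint_natCast_mul_v_sub_inv, qdExpSeries, coeff_mk,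
    coeff_mk, qdfact_succ, ← pow_mul, show (n + 1) ^ 2 = n ^ 2 + 2 * n + 1 by ring, pow_succ,
    pow_add]
  push_cast
  field_simp

lemma rescale_qdExpSeries_mul_rescale_inv :
    rescale v qdExpSeries * rescale v⁻¹ qdExpSeries = qExpSeries :=
  (isQExp_qdExpSeries.rescale_mul_rescale_inv v_ne_zero).eq v_pow_sub_inv_pow_ne_zero
    isQExp_qExpSeries

lemma rescale_sq_qdExpSeries_mul_self :
    rescale (v ^ 2) qdExpSeries * qdExpSeries = rescale v qExpSeries := by
  simp [← rescale_qdExpSeries_mul_rescale_inv, rescale_rescale, sq, v_ne_zero]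

lemma mk_pow_mul_qdExpSeries_mul_rescale :
    PowerSeries.mk ((v * (v - v⁻¹)) ^ ·) * (qdExpSeries * rescale (v⁻¹ ^ 2) qdExpSeries) =
      rescale v qExpSeries := by
  rw [← isQExp_qExpSeries.mk_pow_mul_rescale_inv, ← rescale_qdExpSeries_mul_rescale_inv]
  simp [rescale_rescale, sq, v_ne_zero]

lemma coeff_gaussTwist_qExpSeries (s : ℕ) :
    coeff s (gaussTwist v qExpSeries) = v ^ (-(s : ℤ) ^ 2) * coeff s (rescale v qExpSeries) := by
  rw [gaussTwist, coeff_mk, coeff_rescale, sub_eq_add_neg, zpow_add₀ v_ne_zero, zpow_natCast]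
  ring

lemma Csum_eq_coeff (d par : ℕ) :
    Csum d par = coeff d (gaussTwist v qExpSeries * parityPart par qExpSeries) := by
  unfold Csum
  rw [sum_range_sum_range_eq_sum_antidiagonal d fun k m n ↦ if n % 2 = par then
      v ^ (((n * (n + 1) / 2 : ℕ) : ℤ) - 2 * (k : ℤ) * m + 2 * (k : ℤ)) /
        (qfact n * qdfact k * qdfact m) else 0, coeff_mul]
  refine sum_congr rfl fun ⟨s, n⟩ _ ↦ ?_
  rw [coeff_gaussTwist_qExpSeries, ← rescale_sq_qdExpSeries_mul_self, coeff_mul, mul_sum, sum_mul]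
  refine sum_congr rfl fun ⟨k, m⟩ hkm ↦ ?_
  obtain rfl : k + m = s := by simpa using hkm
  simp only [parityPart, coeff_mk, mul_ite, mul_zero]
  refine if_congr Iff.rfl ?_ rfl
  have hpow : v ^ (((n * (n + 1) / 2 : ℕ) : ℤ) - 2 * (k : ℤ) * m + 2 * (k : ℤ)) =
      v ^ (-((k + m : ℕ) : ℤ) ^ 2) * ((v ^ 2) ^ k * v ^ k ^ 2 * v ^ m ^ 2) *
        v ^ (n * (n + 1) / 2) := by
    simp only [← pow_mul]
    simp only [← zpow_natCast, ← zpow_add₀ v_ne_zero]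
    congr 1
    push_cast
    ring
  rw [hpow, coeff_rescale, qdExpSeries, qExpSeries, coeff_mk, coeff_mk, coeff_mk]
  ring

lemma Dsum_eq_coeff (d par : ℕ) :
    Dsum d par = coeff d (gaussTwist v qExpSeries * parityPart par qExpSeries) := by
  unfold Dsum
  rw [sum_range_sum_range_sum_range_eq_sum_antidiagonal d fun t k m n ↦ if n % 2 = par then
      v ^ ((t : ℤ) ^ 2 - 2 * (d : ℤ) * t + (t : ℤ) + 2 * (n : ℤ) * t
            + ((n * (n + 1) / 2 : ℕ) : ℤ) - 2 * (k : ℤ) * m - 2 * (m : ℤ)) *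
        (v - v⁻¹) ^ t / (qfact n * qdfact k * qdfact m) else 0, coeff_mul]
  refine sum_congr rfl fun ⟨N, n⟩ hNn ↦ ?_
  rw [coeff_gaussTwist_qExpSeries, ← mk_pow_mul_qdExpSeries_mul_rescale, coeff_mul, mul_sum,
    sum_mul]
  refine sum_congr rfl fun ⟨t, s⟩ hts ↦ ?_
  rw [coeff_mul, mul_sum, mul_sum, sum_mul]
  refine sum_congr rfl fun ⟨k, m⟩ hkm ↦ ?_
  obtain rfl : N + n = d := by simpa using hNn
  obtain rfl : t + s = N := by simpa using hts
  obtain rfl : k + m = s := by simpa using hkm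
  simp only [parityPart, coeff_mk, mul_ite, mul_zero]
  refine if_congr Iff.rfl ?_ rfl
  have hpow : v ^ ((t : ℤ) ^ 2 - 2 * ((t + (k + m) + n : ℕ) : ℤ) * t + (t : ℤ) + 2 * (n : ℤ) * t
        + ((n * (n + 1) / 2 : ℕ) : ℤ) - 2 * (k : ℤ) * m - 2 * (m : ℤ)) =
      v ^ (-((t + (k + m) : ℕ) : ℤ) ^ 2) * (v ^ t * (v ^ k ^ 2 * ((v⁻¹ ^ 2) ^ m * v ^ m ^ 2))) *
        v ^ (n * (n + 1) / 2) := by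
    simp only [← pow_mul, inv_pow]
    simp only [← zpow_natCast, ← zpow_neg, ← zpow_add₀ v_ne_zero]
    congr 1
    push_cast
    ring
  rw [hpow, mul_pow, coeff_rescale, qdExpSeries, qExpSeries, coeff_mk, coeff_mk, coeff_mk]
  ring

lemma qfact_mul_coeff_gaussTwist_mul_qExpSeries (n : ℕ) :
    qfact n * coeff n (gaussTwist v qExpSeries * qExpSeries) =
      ∏ j ∈ range n, v * (v ^ j + v⁻¹ ^ j) := by
  induction n with
  | zero =>
    simp [qfact, isQExp_qExpSeries.constantCoeff_eq_one,
      (isQExp_qExpSeries.gaussTwist v_ne_zero).constantCoeff_eq_one]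
  | succ n ih =>
    have hrec := isQExp_qExpSeries.coeff_succ_gaussTwist_mul_self v_ne_zero n
    rw [← qint_natCast_mul_v_sub_inv, Nat.cast_succ] at hrec
    refine mul_left_cancel₀ v_sub_inv_ne_zero ?_
    rw [prod_range_succ, ← ih, qfact_succ]
    linear_combination qfact n * hrec

lemma coeff_succ_gaussTwist_mul_qExpSeries (n : ℕ) :
    coeff (n + 1) (gaussTwist v qExpSeries * qExpSeries) =
      2 * (v ^ (n + 1) * (∏ j ∈ Icc 1 n, (v ^ (j : ℤ) + v ^ (-(j : ℤ)))) / qfact (n + 1)) := by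
  have hprod : ∏ j ∈ Icc 1 n, (v ^ (j : ℤ) + v ^ (-(j : ℤ))) =
      ∏ j ∈ range n, (v ^ (j + 1) + v⁻¹ ^ (j + 1)) := by
    rw [← Ico_add_one_right_eq_Icc, prod_Ico_eq_prod_range]
    simp only [zpow_neg, zpow_natCast, inv_pow, Nat.add_sub_cancel, add_comm 1]
  rw [← mul_div_assoc, eq_div_iff (qfact_ne_zero _), mul_comm,
    qfact_mul_coeff_gaussTwist_mul_qExpSeries, prod_mul_distrib, prod_const, card_range,
    prod_range_succ', hprod, pow_zero, pow_zero]
  ring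

lemma coeff_gaussTwist_mul_parityPart {d par : ℕ} (hd : 1 ≤ d) (hpar : par < 2) :
    coeff d (gaussTwist v qExpSeries * parityPart par qExpSeries) =
      v ^ d * (∏ j ∈ Icc 1 (d - 1), (v ^ (j : ℤ) + v ^ (-(j : ℤ)))) / qfact d := by
  obtain ⟨n, rfl⟩ := Nat.exists_eq_add_of_le' hd
  have hone := isQExp_qExpSeries.gaussTwist_mul_rescale_neg_one v_pow_sub_inv_pow_ne_zero
  have hsplit : 2 * (gaussTwist v qExpSeries * parityPart par qExpSeries) =
      gaussTwist v qExpSeries * qExpSeries + C ((-1) ^ par) := by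
    rw [map_pow, map_neg, map_one]
    linear_combination gaussTwist v qExpSeries * two_mul_parityPart hpar qExpSeries +
      (-1) ^ par * hone
  have hcoeff := congr(coeff (n + 1) $hsplit)
  rw [two_mul, map_add, map_add, coeff_succ_gaussTwist_mul_qExpSeries, coeff_succ_C] at hcoeff
  rw [Nat.add_sub_cancel]
  linear_combination hcoeff / 2

end Quantum

theorem stmt8 (d : ℕ) (hd : 1 ≤ d) :
    Csum d 1 = v ^ d * (∏ j ∈ Finset.Icc 1 (d - 1), (v ^ (j : ℤ) + v ^ (-(j : ℤ)))) / qfact d ∧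
    Csum d 0 = v ^ d * (∏ j ∈ Finset.Icc 1 (d - 1), (v ^ (j : ℤ) + v ^ (-(j : ℤ)))) / qfact d ∧
    Dsum d 0 = v ^ d * (∏ j ∈ Finset.Icc 1 (d - 1), (v ^ (j : ℤ) + v ^ (-(j : ℤ)))) / qfact d ∧
    Dsum d 1 = v ^ d * (∏ j ∈ Finset.Icc 1 (d - 1), (v ^ (j : ℤ) + v ^ (-(j : ℤ)))) / qfact d := by
  refine ⟨?_, ?_, ?_, ?_⟩
  · rw [Csum_eq_coeff, coeff_gaussTwist_mul_parityPart hd one_lt_two]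
  · rw [Csum_eq_coeff, coeff_gaussTwist_mul_parityPart hd two_pos]
  · rw [Dsum_eq_coeff, coeff_gaussTwist_mul_parityPart hd two_pos]
  · rw [Dsum_eq_coeff, coeff_gaussTwist_mul_parityPart hd one_lt_two]
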